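/- Let v ≥ 0 and σ > 0, let X and Y be independent real Gaussian random variables with mean 0 and variance σ², and set K = v²/(2σ²) and Ω = v² + 2σ². Then the Rician random variable α = √((v + X)² + Y²) has mean E[α] = (1/2) √(π Ω /(K+1)) · e^{-K/2} [ (1+K) I₀(K/2) + K I₁(K/2) ], where I₀(z) = (1/π) ∫₀^π e^{z cos θ} dθ and I₁(z) = (1/π) ∫₀^π e^{z cos θ} cos θ dθ are the modified Bessel functions of the first kind of orders 0 and 1. -/

import Mathlib

open MeasureTheory ProbabilityTheory Real Set

/-- Modified Bessel function of the first kind of order 0: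
`I₀(z) = (1/π) ∫₀^π e^(z cos θ) dθ`. -/
noncomputable def besselI0 (z : ℝ) : ℝ :=
  (1 / π) * ∫ θ in (0 : ℝ)..π, Real.exp (z * Real.cos θ)

/-- Modified Bessel function of the first kind of order 1:
`I₁(z) = (1/π) ∫₀^π e^(z cos θ) cos θ dθ`. -/
noncomputable def besselI1 (z : ℝ) : ℝ :=
  (1 / π) * ∫ θ in (0 : ℝ)..π, Real.exp (z * Real.cos θ) * Real.cos θ

open scoped NNReal

lemma gauss_tilt (m : ℝ) (s D : ℝ≥0) (hs : s ≠ 0) (τ : ℝ) (hD0 : D ≠ 0)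
    (hD : (D : ℝ) = 1 + 2 * s * τ) (f : ℝ → ℝ) :
    ∫ y, exp (-τ * y ^ 2) * f y ∂(gaussianReal m s) =
      (√(D : ℝ))⁻¹ * exp (-τ * m ^ 2 / D) * ∫ y, f y ∂(gaussianReal (m / D) (s / D)) := by
  have hsD : s / D ≠ 0 := div_ne_zero hs hD0
  rw [integral_gaussianReal_eq_integral_smul hs, integral_gaussianReal_eq_integral_smul hsD,
    ← integral_const_mul]
  congr 1
  ext y
  have hs' : (0 : ℝ) < s := by exact_mod_cast pos_iff_ne_zero.mpr hs
  have hD' : (0 : ℝ) < D := by exact_mod_cast pos_iff_ne_zero.mpr hD0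
  simp only [gaussianPDFReal, smul_eq_mul, NNReal.coe_div]
  have h1 : √(2 * π * (s / D : ℝ)) = √(2 * π * s) / √(D : ℝ) := by
    rw [← Real.sqrt_div (by positivity)]; congr 1; ring
  have h2 : exp (-(y - m) ^ 2 / (2 * s)) * exp (-τ * y ^ 2) =
      exp (-τ * m ^ 2 / D) * exp (-(y - m / D) ^ 2 / (2 * (s / D))) := by
    rw [← Real.exp_add, ← Real.exp_add]
    congr 1
    have hτ : τ = (D - 1) / (2 * s) := by rw [hD]; field_simp; ring
    rw [hτ]
    field_simp
    ring
  rw [h1]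
  have h3 : √(D : ℝ) ≠ 0 := (Real.sqrt_pos.mpr hD').ne'
  have h4 : √(2 * π * s) ≠ 0 := (Real.sqrt_pos.mpr (by positivity)).ne'
  calc _ = (√(2 * π * s))⁻¹ * (exp (-(y - m) ^ 2 / (2 * s)) * exp (-τ * y ^ 2)) * f y := by ring
    _ = _ := by rw [h2]; field_simp

lemma gauss_sq (m : ℝ) (s : ℝ≥0) : ∫ y, y ^ 2 ∂(gaussianReal m s) = m ^ 2 + s := by
  have h := variance_eq_sub (memLp_id_gaussianReal (μ := m) (v := s) 2)
  rw [variance_id_gaussianReal] at h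
  simp only [Pi.pow_apply, id_eq, integral_id_gaussianReal] at h
  linarith

lemma gauss_sq_int (m : ℝ) (s : ℝ≥0) : Integrable (fun y : ℝ => y ^ 2) (gaussianReal m s) := by
  exact (memLp_id_gaussianReal (μ := m) (v := s) 2).integrable_sq

lemma exp_int (m : ℝ) (s : ℝ≥0) (τ : ℝ) (hτ : 0 ≤ τ) :
    Integrable (fun y : ℝ => exp (-τ * y ^ 2)) (gaussianReal m s) := by
  refine (integrable_const (1 : ℝ)).mono' (by fun_prop) (ae_of_all _ fun y => ?_)
  rw [Real.norm_eq_abs, abs_of_pos (exp_pos _), Real.exp_le_one_iff]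
  nlinarith [mul_nonneg hτ (sq_nonneg y)]

lemma exp_sq_int (m : ℝ) (s : ℝ≥0) (τ : ℝ) (hτ : 0 ≤ τ) :
    Integrable (fun y : ℝ => exp (-τ * y ^ 2) * y ^ 2) (gaussianReal m s) := by
  refine (gauss_sq_int m s).mono' (by fun_prop) (ae_of_all _ fun y => ?_)
  have : exp (-τ * y ^ 2) ≤ 1 := by
    rw [Real.exp_le_one_iff]
    nlinarith [mul_nonneg hτ (sq_nonneg y)]
  rw [Real.norm_eq_abs, abs_of_nonneg (by positivity)]
  nlinarith [sq_nonneg y]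

lemma inner_int (v : ℝ) (s D : ℝ≥0) (hs : s ≠ 0) (τ : ℝ) (hτ : 0 ≤ τ) (hD0 : D ≠ 0)
    (hD : (D : ℝ) = 1 + 2 * s * τ) :
    ∫ p : ℝ × ℝ, (p.1 ^ 2 + p.2 ^ 2) * exp (-τ * (p.1 ^ 2 + p.2 ^ 2))
      ∂((gaussianReal v s).prod (gaussianReal 0 s)) =
      exp (-τ * v ^ 2 / D) * (v ^ 2 / D ^ 3 + 2 * s / D ^ 2) := by
  have hD' : (0 : ℝ) < D := by exact_mod_cast pos_iff_ne_zero.mpr hD0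
  have e : (fun p : ℝ × ℝ => (p.1 ^ 2 + p.2 ^ 2) * exp (-τ * (p.1 ^ 2 + p.2 ^ 2))) =
      fun p => (exp (-τ * p.1 ^ 2) * p.1 ^ 2) * exp (-τ * p.2 ^ 2) +
        exp (-τ * p.1 ^ 2) * (exp (-τ * p.2 ^ 2) * p.2 ^ 2) := by
    ext p
    rw [mul_add (-τ), Real.exp_add]; ring
  rw [e, integral_add ((exp_sq_int v s τ hτ).mul_prod (exp_int 0 s τ hτ))
    ((exp_int v s τ hτ).mul_prod (exp_sq_int 0 s τ hτ)),
    integral_prod_mul (fun y : ℝ => exp (-τ * y ^ 2) * y ^ 2) (fun y : ℝ => exp (-τ * y ^ 2)),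
    integral_prod_mul (fun y : ℝ => exp (-τ * y ^ 2)) (fun y : ℝ => exp (-τ * y ^ 2) * y ^ 2),
    gauss_tilt v s D hs τ hD0 hD, gauss_tilt 0 s D hs τ hD0 hD, gauss_sq, gauss_sq]
  have h0 : ∀ m : ℝ, ∫ y, exp (-τ * y ^ 2) ∂(gaussianReal m s) =
      (√(D : ℝ))⁻¹ * exp (-τ * m ^ 2 / D) := by
    intro m
    have := gauss_tilt m s D hs τ hD0 hD (fun _ => 1)
    simpa using this
  rw [h0, h0]
  have h3 : (√(D : ℝ))⁻¹ * (√(D : ℝ))⁻¹ = (D : ℝ)⁻¹ := by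
    rw [← mul_inv, Real.mul_self_sqrt hD'.le]
  simp only [NNReal.coe_div]
  norm_num
  calc _ = ((√(D : ℝ))⁻¹ * (√(D : ℝ))⁻¹) * exp (-(τ * v ^ 2) / D) *
        ((v / D) ^ 2 + 2 * (s / D)) := by ring
    _ = _ := by rw [h3]; field_simp

lemma sqrt_repr (a : ℝ) (ha : 0 ≤ a) :
    ∫ x : ℝ, a * exp (-x ^ 2 * a) = √π * √a := by
  have : (fun x : ℝ => a * exp (-x ^ 2 * a)) = fun x => a * exp (-a * x ^ 2) := by
    ext x; congr 2; ring
  rw [this, integral_const_mul, integral_gaussian, Real.sqrt_div pi_pos.le]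
  rcases ha.eq_or_lt with rfl | h
  · simp
  · have h1 : √a ≠ 0 := (Real.sqrt_pos.mpr h).ne'
    field_simp
    rw [Real.sq_sqrt ha]

lemma sqrt_repr_int (a : ℝ) (ha : 0 ≤ a) :
    Integrable (fun x : ℝ => a * exp (-x ^ 2 * a)) := by
  rcases ha.eq_or_lt with rfl | h
  · simp
  · have : (fun x : ℝ => a * exp (-x ^ 2 * a)) = fun x => a * exp (-a * x ^ 2) := by
      ext x; congr 2; ring
    rw [this]
    exact (integrable_exp_neg_mul_sq h).const_mul a

lemma mean_eq (v : ℝ) (s : ℝ≥0) (hs : s ≠ 0) :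
    √π * ∫ p : ℝ × ℝ, √(p.1 ^ 2 + p.2 ^ 2) ∂((gaussianReal v s).prod (gaussianReal 0 s)) =
    ∫ x : ℝ, exp (-x ^ 2 * v ^ 2 / (1 + 2 * s * x ^ 2)) *
      (v ^ 2 / (1 + 2 * s * x ^ 2) ^ 3 + 2 * s / (1 + 2 * s * x ^ 2) ^ 2) := by
  rw [← integral_const_mul]
  have h1 : ∀ p : ℝ × ℝ, √π * √(p.1 ^ 2 + p.2 ^ 2) =
      ∫ x : ℝ, (p.1 ^ 2 + p.2 ^ 2) * exp (-x ^ 2 * (p.1 ^ 2 + p.2 ^ 2)) := fun p =>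
    (sqrt_repr _ (by positivity)).symm
  have hint : Integrable (fun p : ℝ × ℝ => √π * √(p.1 ^ 2 + p.2 ^ 2))
      ((gaussianReal v s).prod (gaussianReal 0 s)) := by
    apply Integrable.const_mul
    refine (((gauss_sq_int v s).comp_fst (gaussianReal 0 s)).add
      ((gauss_sq_int 0 s).comp_snd (gaussianReal v s)) |>.add (integrable_const (1 : ℝ))).mono'
      (by fun_prop) (ae_of_all _ fun p => ?_)
    rw [Real.norm_eq_abs, abs_of_nonneg (Real.sqrt_nonneg _)]
    simp only [Pi.add_apply]
    rw [Real.sqrt_le_left (by positivity)]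
    nlinarith [sq_nonneg p.1, sq_nonneg p.2]
  simp_rw [h1]
  rw [integral_integral_swap]
  · congr 1
    ext x
    have hpos : (0 : ℝ) < 1 + 2 * s * x ^ 2 := by positivity
    have := inner_int v s ⟨1 + 2 * s * x ^ 2, hpos.le⟩ hs (x ^ 2) (by positivity)
      (by intro h; exact hpos.ne' (congrArg NNReal.toReal h)) rfl
    exact this
  · rw [integrable_prod_iff (by
      apply Measurable.aestronglyMeasurable; unfold Function.uncurry; fun_prop)]
    refine ⟨ae_of_all _ fun p => sqrt_repr_int (p.1 ^ 2 + p.2 ^ 2) (by positivity), ?_⟩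
    refine hint.congr (ae_of_all _ fun p => ?_)
    simp only [Function.uncurry]
    rw [h1]
    congr 1
    ext x
    rw [Real.norm_eq_abs, abs_of_nonneg (by positivity)]

lemma subst_tan (v σ K : ℝ) (hσ : 0 < σ) (hK : K = v ^ 2 / (2 * σ ^ 2)) :
    ∫ x : ℝ, exp (-x ^ 2 * v ^ 2 / (1 + 2 * σ ^ 2 * x ^ 2)) *
      (v ^ 2 / (1 + 2 * σ ^ 2 * x ^ 2) ^ 3 + 2 * σ ^ 2 / (1 + 2 * σ ^ 2 * x ^ 2) ^ 2) =
    √2 * σ * ∫ φ in (-(π / 2))..(π / 2),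
      exp (-K * sin φ ^ 2) * (cos φ ^ 2 + K * cos φ ^ 4) := by
  have h2 : (0 : ℝ) < √2 := by positivity
  have h22 : √2 ^ 2 = (2 : ℝ) := Real.sq_sqrt (by norm_num)
  have hv : v ^ 2 = 2 * σ ^ 2 * K := by rw [hK]; field_simp
  have him : (fun φ => tan φ / (√2 * σ)) '' Ioo (-(π / 2)) (π / 2) = univ := by
    rw [← Function.comp_def (fun y => y / (√2 * σ)) tan, image_comp, image_tan_Ioo, image_univ]
    refine range_eq_univ.mpr fun y => ⟨y * (√2 * σ), ?_⟩
    field_simp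
  rw [← setIntegral_univ, ← him, integral_image_eq_integral_abs_deriv_smul measurableSet_Ioo
    (f' := fun φ => (1 / cos φ ^ 2) / (√2 * σ))]
  · rw [intervalIntegral.integral_of_le (by linarith [pi_pos]), integral_Ioc_eq_integral_Ioo,
      ← integral_const_mul]
    refine setIntegral_congr_fun measurableSet_Ioo fun φ hφ => ?_
    have hc : 0 < cos φ := cos_pos_of_mem_Ioo hφ
    have hD : 1 + 2 * σ ^ 2 * (tan φ / (√2 * σ)) ^ 2 = 1 / cos φ ^ 2 := by
      rw [tan_eq_sin_div_cos]
      field_simp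
      rw [h22]
      nlinarith [sin_sq_add_cos_sq φ]
    simp only [smul_eq_mul]
    rw [hD, abs_of_pos (by positivity), hv]
    have he : -(tan φ / (√2 * σ)) ^ 2 * (2 * σ ^ 2 * K) / (1 / cos φ ^ 2) = -K * sin φ ^ 2 := by
      rw [tan_eq_sin_div_cos]
      field_simp
      rw [h22]
    rw [he]
    field_simp
    rw [h22]; ring
  · intro φ hφ
    exact ((hasDerivAt_tan (cos_pos_of_mem_Ioo hφ).ne').div_const _).hasDerivWithinAt
  · intro a ha b hb hab
    have : tan a = tan b := by
      have h : √2 * σ ≠ 0 := by positivity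
      simpa [div_left_inj' h] using hab
    exact injOn_tan ha hb this

lemma trig_int (K : ℝ) :
    ∫ φ in (-(π / 2))..(π / 2), exp (-K * sin φ ^ 2) * (cos φ ^ 2 + K * cos φ ^ 4) =
      π / 2 * exp (-K / 2) * ((1 + K) * besselI0 (K / 2) + K * besselI1 (K / 2)) := by
  set g : ℝ → ℝ := fun φ => exp (-K * sin φ ^ 2) * (cos φ ^ 2 + K * cos φ ^ 4) with hg
  have hgc : Continuous g := by fun_prop
  have heven : ∫ φ in (-(π / 2))..0, g φ = ∫ φ in (0 : ℝ)..(π / 2), g φ := by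
    have := intervalIntegral.integral_comp_neg (a := 0) (b := π / 2) g
    rw [neg_zero] at this
    rw [← this]
    congr 1
    ext x
    simp [hg]
  have h1 : ∫ φ in (-(π / 2))..(π / 2), g φ = ∫ θ in (0 : ℝ)..π, g (θ / 2) := by
    rw [← intervalIntegral.integral_add_adjacent_intervals (b := 0)
      (hgc.intervalIntegrable _ _) (hgc.intervalIntegrable _ _), heven,
      intervalIntegral.integral_comp_div g (by norm_num)]
    rw [zero_div, smul_eq_mul]; ring
  have h2 : ∫ θ in (0 : ℝ)..π, exp (K / 2 * cos θ) * (cos θ - K / 2 * sin θ ^ 2) = 0 := by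
    rw [intervalIntegral.integral_eq_sub_of_hasDerivAt
      (f := fun θ => sin θ * exp (K / 2 * cos θ))]
    · simp
    · intro θ _
      refine ((hasDerivAt_sin θ).mul (((hasDerivAt_cos θ).const_mul (K / 2)).exp)).congr_deriv ?_
      ring
    · exact Continuous.intervalIntegrable (by fun_prop) _ _
  have h3 : ∀ θ, g (θ / 2) = exp (-K / 2) / 2 * ((1 + K) * exp (K / 2 * cos θ) +
      K * (exp (K / 2 * cos θ) * cos θ) +
      exp (K / 2 * cos θ) * (cos θ - K / 2 * sin θ ^ 2)) := by
    intro θ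
    have hc : cos (θ / 2) ^ 2 = (1 + cos θ) / 2 := by
      rw [cos_sq]; rw [show 2 * (θ / 2) = θ by ring]; ring
    have hs : sin (θ / 2) ^ 2 = (1 - cos θ) / 2 := by
      rw [sin_sq, hc]; ring
    have h4 : cos (θ / 2) ^ 4 = ((1 + cos θ) / 2) ^ 2 := by rw [← hc]; ring
    have he : exp (-K * ((1 - cos θ) / 2)) = exp (-K / 2) * exp (K / 2 * cos θ) := by
      rw [← Real.exp_add]; congr 1; ring
    simp only [hg]
    rw [hc, hs, h4, he, sin_sq]
    ring
  rw [h1]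
  simp_rw [h3]
  rw [intervalIntegral.integral_const_mul, intervalIntegral.integral_add,
    intervalIntegral.integral_add, h2, intervalIntegral.integral_const_mul,
    intervalIntegral.integral_const_mul, besselI0, besselI1]
  · have := pi_pos.ne'
    field_simp
    ring
  all_goals exact Continuous.intervalIntegrable (by fun_prop) _ _

/-- For `v ≥ 0`, `σ > 0`, independent Gaussians `X, Y` with mean `0`
and variance `σ²`, with `K = v²/(2σ²)` and `Ω = v² + 2σ²`, the Rician random variable
`α = √((v + X)² + Y²)` has mean
`E[α] = (1/2) √(π Ω /(K+1)) e^(-K/2) [(1+K) I₀(K/2) + K I₁(K/2)]`. -/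
theorem rician_mean
    {Ω : Type*} [MeasurableSpace Ω] (P : Measure Ω) [IsProbabilityMeasure P]
    (v σ K Om : ℝ) (hv : 0 ≤ v) (hσ : 0 < σ)
    (hK : K = v ^ 2 / (2 * σ ^ 2)) (hOm : Om = v ^ 2 + 2 * σ ^ 2)
    (X Y : Ω → ℝ) (hXmeas : Measurable X) (hYmeas : Measurable Y)
    (hX : Measure.map X P = gaussianReal 0 (Real.toNNReal (σ ^ 2)))
    (hY : Measure.map Y P = gaussianReal 0 (Real.toNNReal (σ ^ 2)))
    (hXY : IndepFun X Y P) :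
    (∫ ω, Real.sqrt ((v + X ω) ^ 2 + (Y ω) ^ 2) ∂P) =
      (1 / 2) * Real.sqrt (π * Om / (K + 1)) * Real.exp (-K / 2) *
        ((1 + K) * besselI0 (K / 2) + K * besselI1 (K / 2)) := by
  set s : ℝ≥0 := Real.toNNReal (σ ^ 2) with hs
  have hsσ : (s : ℝ) = σ ^ 2 := Real.coe_toNNReal _ (by positivity)
  have hs0 : s ≠ 0 := by
    rw [hs]; exact (Real.toNNReal_pos.mpr (by positivity)).ne'
  have hX' : Measure.map (fun ω => v + X ω) P = gaussianReal v s := by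
    have := gaussianReal_map_const_add (μ := 0) (v := s) v
    rw [← hX, Measure.map_map (by fun_prop) hXmeas] at this
    simpa [Function.comp_def] using this
  have hind : IndepFun (fun ω => v + X ω) Y P :=
    hXY.comp (φ := fun x => v + x) (ψ := id) (by fun_prop) measurable_id
  have hmap := (indepFun_iff_map_prod_eq_prod_map_map
    (by fun_prop) (by fun_prop)).mp hind
  rw [hX', hY] at hmap
  have h1 : (∫ ω, √((v + X ω) ^ 2 + (Y ω) ^ 2) ∂P) =
      ∫ p : ℝ × ℝ, √(p.1 ^ 2 + p.2 ^ 2) ∂((gaussianReal v s).prod (gaussianReal 0 s)) := by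
    rw [← hmap, integral_map (by fun_prop) (by fun_prop)]
  have h2 := mean_eq v s hs0
  rw [hsσ, subst_tan v σ K hσ hK, trig_int, ← h1] at h2
  have hpi : (0 : ℝ) < √π := Real.sqrt_pos.mpr pi_pos
  have h3 : √(π * Om / (K + 1)) = √π * (√2 * σ) := by
    have hK1 : 0 < K + 1 := by rw [hK]; positivity
    have : π * Om / (K + 1) = π * (2 * σ ^ 2) := by
      rw [div_eq_iff hK1.ne', hOm, hK]; field_simp
    rw [this, Real.sqrt_mul pi_pos.le, Real.sqrt_mul (by norm_num), Real.sqrt_sq hσ.le]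
  rw [h3]
  apply mul_left_cancel₀ hpi.ne'
  rw [h2]
  have hpp : √π * √π = π := Real.mul_self_sqrt pi_pos.le
  linear_combination (-(√2 * σ * (1 / 2) * exp (-K / 2) *
    ((1 + K) * besselI0 (K / 2) + K * besselI1 (K / 2)))) * hpp
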